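/- Let $C$ be a symmetric $n \times n$ real matrix. Then $\alpha_C^{\mathrm{Nest}} \le \alpha_{Q_C}^{\mathrm{cop}}$, where $\alpha_C^{\mathrm{Nest}} = \inf\{ C \bullet W : W \text{ symmetric } n \times n \text{ positive semidefinite, and there exists } u \in \mathbb{R}^n \text{ with } u_i \ge 0,\ \sum_i u_i = 1,\ \operatorname{Diag}(u) - W \text{ positive semidefinite}\}$ and $\alpha_{Q_C}^{\mathrm{cop}} = \inf\{ Q_C \bullet X : X \text{ symmetric } 2n \times 2n \text{ positive semidefinite},\ X_{ij} \ge 0 \text{ for all } i,j,\ \sum_{i,j} X_{ij} = 1 \}$ with $Q_C = \begin{pmatrix} C & -C \\ -C & C \end{pmatrix}$. -/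

import Mathlib

open Matrix

/-!
If `X` is doubly nonnegative on `ι ⊕ ι` and `D` is the matrix of `x ↦ (x, -x)`, then
`W = Dᵀ * X * D` is Nesterov feasible with the same objective value, because
`fromBlocks C (-C) (-C) C = D * C * Dᵀ`. The weights are the row sums `r` of `X`, folded along
`ι ⊕ ι → ι`: signs square to one, so `diagonal u - W = Dᵀ * (diagonal r - X) * D`, and
`diagonal r - X` is the Laplacian of the weighted graph with edge weights `X i j ≥ 0`.
-/

lemma two_mul_dotProduct_diagonal_rowSum_sub_mulVec {ι R : Type*} [Fintype ι] [DecidableEq ι]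
    [CommRing R] {A : Matrix ι ι R} (hA : A.IsSymm) (x : ι → R) :
    2 * (x ⬝ᵥ (diagonal (fun i => ∑ j, A i j) - A) *ᵥ x) =
      ∑ i, ∑ j, A i j * (x i - x j) ^ 2 := by
  have hdiag : x ⬝ᵥ diagonal (fun i => ∑ j, A i j) *ᵥ x = ∑ i, ∑ j, A i j * x i ^ 2 := by
    simp only [dotProduct, mulVec_diagonal, Finset.sum_mul, Finset.mul_sum]
    exact Finset.sum_congr rfl fun i _ => Finset.sum_congr rfl fun j _ => by ring
  have hswap : ∑ i, ∑ j, A i j * x i ^ 2 = ∑ i, ∑ j, A i j * x j ^ 2 := by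
    rw [Finset.sum_comm]
    simp only [hA.apply]
  have hcross : x ⬝ᵥ A *ᵥ x = ∑ i, ∑ j, x i * A i j * x j := by
    simp only [dotProduct, mulVec, Finset.mul_sum, mul_assoc]
  rw [sub_mulVec, dotProduct_sub, mul_sub, two_mul, hdiag]
  nth_rw 2 [hswap]
  simp only [hcross, Finset.mul_sum, ← Finset.sum_add_distrib, ← Finset.sum_sub_distrib]
  exact Finset.sum_congr rfl fun i _ => Finset.sum_congr rfl fun j _ => by ring

lemma posSemidef_iff_of_trivialStar {ι R : Type*} [Fintype ι] [Ring R] [PartialOrder R] [StarRing R]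
    [TrivialStar R] {A : Matrix ι ι R} :
    A.PosSemidef ↔ Aᵀ = A ∧ ∀ x : ι → R, 0 ≤ x ⬝ᵥ A *ᵥ x := by
  simp only [posSemidef_iff_dotProduct_mulVec, IsHermitian, conjTranspose_eq_transpose_of_trivial,
    star_trivial]

section OrderedRing

variable {ι R : Type*} [CommRing R] [LinearOrder R] [IsStrictOrderedRing R] [StarRing R]
  [TrivialStar R]

lemma two_mul_abs_apply_le_of_posSemidef {A : Matrix ι ι R} (hA : A.PosSemidef) (i j : ι) :
    2 * |A i j| ≤ A i i + A j j := by
  have hji : A j i = A i j := by simpa using hA.isHermitian.apply i j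
  have hplus := (hA.submatrix ![i, j]).dotProduct_mulVec_nonneg ![1, 1]
  have hminus := (hA.submatrix ![i, j]).dotProduct_mulVec_nonneg ![1, -1]
  simp only [dotProduct, mulVec, Fin.sum_univ_two, Pi.star_apply, star_trivial, submatrix_apply,
    cons_val_zero, cons_val_one, hji] at hplus hminus
  rw [← abs_two, ← abs_mul, abs_le]
  constructor <;> linarith

lemma posSemidef_diagonal_rowSum_sub [Fintype ι] [DecidableEq ι] {A : Matrix ι ι R}
    (hA : A.IsSymm) (hnonneg : ∀ i j, 0 ≤ A i j) :
    (diagonal (fun i => ∑ j, A i j) - A).PosSemidef := by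
  refine posSemidef_iff_of_trivialStar.mpr ⟨(isSymm_diagonal _).sub hA, fun x => ?_⟩
  rw [← mul_nonneg_iff_of_pos_left (zero_lt_two' R),
    two_mul_dotProduct_diagonal_rowSum_sub_mulVec hA]
  exact Finset.sum_nonneg fun i _ => Finset.sum_nonneg fun j _ =>
    mul_nonneg (hnonneg i j) (sq_nonneg _)

end OrderedRing

lemma sum_mul_mul_transpose_apply_mul {ι ι' κ κ' R : Type*} [Fintype ι] [Fintype ι'] [Fintype κ]
    [Fintype κ'] [CommSemiring R] (A : Matrix κ ι R) (C : Matrix ι ι' R) (B : Matrix κ' ι' R)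
    (X : Matrix κ κ' R) :
    ∑ i, ∑ j, (A * C * Bᵀ) i j * X i j = ∑ i, ∑ j, C i j * (Aᵀ * X * B) i j := by
  simp only [← hadamard_apply, sum_hadamard_eq, transpose_mul, transpose_transpose,
    Matrix.mul_assoc, trace_mul_comm A]

section SignedDouble

variable {ι R : Type*} [Fintype ι] [DecidableEq ι] [CommRing R]

variable (ι R) in
/-- The matrix of `x ↦ (x, -x)`, through which problems on `ι` and on `ι ⊕ ι` are compared. -/
def signedDouble : Matrix (ι ⊕ ι) ι R :=
  fromRows 1 (-1)

lemma signedDouble_mul_mul_transpose (C : Matrix ι ι R) :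
    signedDouble ι R * C * (signedDouble ι R)ᵀ = fromBlocks C (-C) (-C) C := by
  simp [signedDouble, transpose_fromRows, fromRows_mul]

lemma transpose_signedDouble_mul_diagonal_mul (r : ι ⊕ ι → R) :
    (signedDouble ι R)ᵀ * diagonal r * signedDouble ι R =
      diagonal fun i => r (.inl i) + r (.inr i) := by
  have hblocks : diagonal r = fromBlocks (diagonal (r ∘ .inl)) 0 0 (diagonal (r ∘ .inr)) := by
    rw [fromBlocks_diagonal, Sum.elim_comp_inl_inr]
  rw [hblocks, Matrix.mul_assoc, signedDouble, fromBlocks_mul_fromRows, transpose_fromRows,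
    fromCols_mul_fromRows]
  simp [diagonal_add]

end SignedDouble

section Bounds

variable {ι κ : Type*} [Fintype ι] [DecidableEq ι] [Fintype κ]

variable (ι) in
/-- The feasible set of Nesterov's relaxation: `0 ≼ W ≼ Diag u` for some `u` in the standard
simplex. -/
def nesterovFeasible : Set (Matrix ι ι ℝ) :=
  {W | W.PosSemidef ∧ ∃ u ∈ stdSimplex ℝ ι, (diagonal u - W).PosSemidef}

variable (κ) in
/-- The feasible set of the copositive bound: doubly nonnegative matrices (both positive
semidefinite and entrywise nonnegative) whose entries sum to one. -/
def copositiveFeasible : Set (Matrix κ κ ℝ) :=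
  {X | X.PosSemidef ∧ (∀ i j, 0 ≤ X i j) ∧ ∑ i, ∑ j, X i j = 1}

/-- Nesterov's bound `α_C^Nest`. As an infimum of reals it is `0` when `ι` is empty, the feasible
set then being empty. -/
noncomputable def nesterovBound (C : Matrix ι ι ℝ) : ℝ :=
  sInf {r | ∃ W ∈ nesterovFeasible ι, r = ∑ i, ∑ j, C i j * W i j}

/-- The copositive bound `α_Q^cop`. As an infimum of reals it is `0` when `κ` is empty, the
feasible set then being empty. -/
noncomputable def copositiveBound (Q : Matrix κ κ ℝ) : ℝ :=
  sInf {r | ∃ X ∈ copositiveFeasible κ, r = ∑ i, ∑ j, Q i j * X i j}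

lemma mem_nesterovFeasible_iff {W : Matrix ι ι ℝ} :
    W ∈ nesterovFeasible ι ↔ Wᵀ = W ∧ (∀ x : ι → ℝ, 0 ≤ x ⬝ᵥ W *ᵥ x) ∧
      ∃ u : ι → ℝ, (∀ i, 0 ≤ u i) ∧ ∑ i, u i = 1 ∧
        ∀ x : ι → ℝ, 0 ≤ x ⬝ᵥ (diagonal u - W) *ᵥ x := by
  simp +contextual only [nesterovFeasible, Set.mem_ofPred_eq, posSemidef_iff_of_trivialStar,
    stdSimplex, and_assoc, transpose_sub, diagonal_transpose, true_and, and_congr_right_iff,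
    implies_true]

lemma mem_copositiveFeasible_iff {X : Matrix κ κ ℝ} :
    X ∈ copositiveFeasible κ ↔ Xᵀ = X ∧ (∀ x : κ → ℝ, 0 ≤ x ⬝ᵥ X *ᵥ x) ∧
      (∀ i j, 0 ≤ X i j) ∧ ∑ i, ∑ j, X i j = 1 := by
  simp only [copositiveFeasible, Set.mem_ofPred_eq, posSemidef_iff_of_trivialStar, and_assoc]

lemma abs_apply_le_one_of_mem_nesterovFeasible {W : Matrix ι ι ℝ} (hW : W ∈ nesterovFeasible ι)
    (i j : ι) : |W i j| ≤ 1 := by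
  obtain ⟨hpsd, u, hu, hle⟩ := hW
  have hdiag (k : ι) : W k k ≤ 1 := by
    have hk : 0 ≤ u k - W k k := by simpa using hle.diag_nonneg (i := k)
    linarith [(mem_Icc_of_mem_stdSimplex hu k).2]
  linarith [two_mul_abs_apply_le_of_posSemidef hpsd i j, hdiag i, hdiag j]

lemma bddBelow_nesterovFeasible_values (C : Matrix ι ι ℝ) :
    BddBelow {r | ∃ W ∈ nesterovFeasible ι, r = ∑ i, ∑ j, C i j * W i j} := by
  refine ⟨∑ i, ∑ j, -|C i j|, ?_⟩
  rintro _ ⟨W, hW, rfl⟩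
  refine Finset.sum_le_sum fun i _ => Finset.sum_le_sum fun j _ => neg_le_of_abs_le ?_
  rw [abs_mul]
  exact mul_le_of_le_one_right (abs_nonneg _) (abs_apply_le_one_of_mem_nesterovFeasible hW i j)

lemma nesterovFeasible_eq_empty [IsEmpty ι] : nesterovFeasible ι = ∅ := by
  simp [nesterovFeasible, stdSimplex_of_isEmpty_index]

lemma copositiveFeasible_eq_empty [IsEmpty κ] : copositiveFeasible κ = ∅ := by
  simp [copositiveFeasible]

lemma copositiveFeasible_nonempty [Nonempty κ] : (copositiveFeasible κ).Nonempty := by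
  classical
  obtain ⟨a⟩ := ‹Nonempty κ›
  have hsingle : (0 : κ → ℝ) ≤ Pi.single a 1 := Pi.single_nonneg.mpr zero_le_one
  refine ⟨diagonal (Pi.single a 1), .diagonal hsingle, fun i j => ?_, by simp [diagonal_apply]⟩
  rw [diagonal_apply]
  split_ifs
  exacts [hsingle i, le_rfl]

theorem transpose_signedDouble_mul_mul_mem_nesterovFeasible {X : Matrix (ι ⊕ ι) (ι ⊕ ι) ℝ}
    (hX : X ∈ copositiveFeasible (ι ⊕ ι)) :
    (signedDouble ι ℝ)ᵀ * X * signedDouble ι ℝ ∈ nesterovFeasible ι := by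
  obtain ⟨hpsd, hnonneg, hsum⟩ := hX
  have compress {A : Matrix (ι ⊕ ι) (ι ⊕ ι) ℝ} (hA : A.PosSemidef) :
      ((signedDouble ι ℝ)ᵀ * A * signedDouble ι ℝ).PosSemidef := by
    simpa only [conjTranspose_eq_transpose_of_trivial] using
      hA.conjTranspose_mul_mul_same (signedDouble ι ℝ)
  have hrow (a : ι ⊕ ι) : 0 ≤ ∑ b, X a b := Finset.sum_nonneg fun b _ => hnonneg a b
  refine ⟨compress hpsd, fun i => ∑ b, X (.inl i) b + ∑ b, X (.inr i) b,
    ⟨fun i => add_nonneg (hrow _) (hrow _), ?_⟩, ?_⟩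
  · rw [Finset.sum_add_distrib, ← Fintype.sum_sum_type fun a => ∑ b, X a b, hsum]
  · rw [← transpose_signedDouble_mul_diagonal_mul fun a => ∑ b, X a b, ← Matrix.sub_mul,
      ← Matrix.mul_sub]
    have hsymm : X.IsSymm := (posSemidef_iff_of_trivialStar.mp hpsd).1
    exact compress (posSemidef_diagonal_rowSum_sub hsymm hnonneg)

theorem stmt_7_general (C : Matrix ι ι ℝ) :
    nesterovBound C ≤ copositiveBound (fromBlocks C (-C) (-C) C) := by
  cases isEmpty_or_nonempty ι with
  | inl _ =>
    simp [nesterovBound, copositiveBound, nesterovFeasible_eq_empty, copositiveFeasible_eq_empty]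
  | inr _ =>
    obtain ⟨X₀, hX₀⟩ := copositiveFeasible_nonempty (κ := ι ⊕ ι)
    refine csInf_le_csInf (bddBelow_nesterovFeasible_values C) ⟨_, X₀, hX₀, rfl⟩ ?_
    rintro _ ⟨X, hX, rfl⟩
    refine ⟨_, transpose_signedDouble_mul_mul_mem_nesterovFeasible hX, ?_⟩
    rw [← signedDouble_mul_mul_transpose, sum_mul_mul_transpose_apply_mul]

end Bounds

/-- Theorem 1 (first part): Nesterov's bound never exceeds the copositive bound,
`α_C^Nest ≤ α_{Q_C}^cop`. -/
theorem stmt_7 (n : ℕ) (C : Matrix (Fin n) (Fin n) ℝ) (hC : Cᵀ = C) :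
    sInf {r : ℝ | ∃ W : Matrix (Fin n) (Fin n) ℝ, Wᵀ = W ∧
        (∀ x : Fin n → ℝ, 0 ≤ x ⬝ᵥ W *ᵥ x) ∧
        (∃ u : Fin n → ℝ, (∀ i, 0 ≤ u i) ∧ (∑ i, u i) = 1 ∧
          ∀ x : Fin n → ℝ, 0 ≤ x ⬝ᵥ (Matrix.diagonal u - W) *ᵥ x) ∧
        r = ∑ i, ∑ j, C i j * W i j} ≤
    sInf {r : ℝ | ∃ X : Matrix (Fin n ⊕ Fin n) (Fin n ⊕ Fin n) ℝ, Xᵀ = X ∧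
        (∀ x : Fin n ⊕ Fin n → ℝ, 0 ≤ x ⬝ᵥ X *ᵥ x) ∧
        (∀ i j, 0 ≤ X i j) ∧ (∑ i, ∑ j, X i j) = 1 ∧
        r = ∑ i, ∑ j, fromBlocks C (-C) (-C) C i j * X i j} := by
  simpa only [nesterovBound, copositiveBound, mem_nesterovFeasible_iff, mem_copositiveFeasible_iff,
    and_assoc] using stmt_7_general C
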